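/- Let F be an infinite field, let n ≥ 2 be an integer, and let w₁, w₂, w₃, w₄ be nontrivial words. Then every element of SL_n(F) that is not in the center Z(SL_n(F)) is a product g₁g₂g₃g₄ with g_i ∈ w_i(SL_n(F)) for i = 1, 2, 3, 4. -/

import Mathlib

/-- The set of `w`-values in the group `G`: the image of the word map `w : G^d → G`. -/
def wordValues {d : ℕ} (w : FreeGroup (Fin d)) (G : Type*) [Group G] : Set G :=
  Set.range fun g : Fin d → G => FreeGroup.lift g w

open Polynomial in
lemma shear_deg {F : Type*} [Field F] (a b f : F[X]) (hf : 0 < f.degree) (hb : b ≠ 0)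
    (h : a.degree ≤ b.degree) : b.degree < (a + f * b).degree := by
  have h1 : b.degree < (f * b).degree := by
    rw [degree_mul, degree_eq_natDegree hb]
    rw [degree_eq_natDegree (by rintro rfl; simp at hf)] at hf ⊢
    norm_cast at hf ⊢
    omega
  rwa [degree_add_eq_right_of_degree_lt (lt_of_le_of_lt h h1)]

universe u
section
open Polynomial Matrix

def upM {R : Type*} [CommRing R] (f : R) : SpecialLinearGroup (Fin 2) R :=
  ⟨!![1, f; 0, 1], by simp [det_fin_two]⟩
def loM {R : Type*} [CommRing R] (f : R) : SpecialLinearGroup (Fin 2) R :=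
  ⟨!![1, 0; f, 1], by simp [det_fin_two]⟩

/-- nonzero vectors -/
def NZV (R : Type*) [CommRing R] := {v : Fin 2 → R // v ≠ 0}

instance (R : Type*) [CommRing R] : MulAction (SpecialLinearGroup (Fin 2) R) (NZV R) where
  smul g v := ⟨g • v.1, (smul_ne_zero_iff_ne g).2 v.2⟩
  one_smul _ := Subtype.ext (one_smul _ _)
  mul_smul _ _ _ := Subtype.ext (mul_smul _ _ _)

variable {F : Type*} [Field F]

lemma upM_smul (f : F[X]) (v : NZV F[X]) : (upM f • v).1 = ![v.1 0 + f * v.1 1, v.1 1] := by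
  change (upM f).1 *ᵥ v.1 = _
  ext i; fin_cases i <;> simp [upM, mulVec, dotProduct, Fin.sum_univ_two]
lemma loM_smul (f : F[X]) (v : NZV F[X]) : (loM f • v).1 = ![v.1 0, v.1 1 + f * v.1 0] := by
  change (loM f).1 *ᵥ v.1 = _
  ext i; fin_cases i <;> simp [loM, mulVec, dotProduct, Fin.sum_univ_two, add_comm]
lemma upM_mul {R : Type*} [CommRing R] (f g : R) : upM f * upM g = upM (f + g) := by
  apply Subtype.ext
  change !![1, f; 0, 1] * !![1, g; 0, 1] = !![1, f + g; 0, 1]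
  simp [add_comm]
lemma loM_mul {R : Type*} [CommRing R] (f g : R) : loM f * loM g = loM (f + g) := by
  apply Subtype.ext
  change !![1, 0; f, 1] * !![1, 0; g, 1] = !![1, 0; f + g, 1]
  simp
lemma upM_inv {R : Type*} [CommRing R] (f : R) : (upM f)⁻¹ = upM (-f) := by
  rw [inv_eq_iff_mul_eq_one, upM_mul]; ext i j; fin_cases i <;> fin_cases j <;> simp [upM]
lemma loM_inv {R : Type*} [CommRing R] (f : R) : (loM f)⁻¹ = loM (-f) := by
  rw [inv_eq_iff_mul_eq_one, loM_mul]; ext i j; fin_cases i <;> fin_cases j <;> simp [loM]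

def setA (F : Type*) [Field F] : Set (NZV F[X]) := {v | (v.1 0).degree ≤ (v.1 1).degree}

lemma up_A (f : F[X]) (hf : 0 < f.degree) (v : NZV F[X]) (hv : v ∈ setA F) :
    upM f • v ∉ setA F := by
  have hb : v.1 1 ≠ 0 := by
    intro h
    have hv' : (v.1 0).degree ≤ (v.1 1).degree := hv
    rw [h, degree_zero, le_bot_iff, degree_eq_bot] at hv'
    apply v.2; ext i : 1; fin_cases i <;> simp [h, hv']
  have := shear_deg _ _ f hf hb hv
  simpa [setA, upM_smul] using this

lemma lo_B (f : F[X]) (hf : 0 < f.degree) (v : NZV F[X]) (hv : v ∉ setA F) :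
    loM f • v ∈ setA F := by
  have hv' : (v.1 1).degree < (v.1 0).degree := not_le.1 hv
  have hb : v.1 0 ≠ 0 := by
    rintro h; rw [h] at hv'; simp at hv'
  have := shear_deg _ _ f hf hb hv'.le
  simpa [setA, loM_smul] using this.le

open Pointwise in
lemma free_inj {F : Type u} [Field F] : Function.Injective (FreeGroup.lift
    (fun i : ULift.{u} ℕ => (upM (X ^ (i.down+1)) * loM (X ^ (i.down+1)) : SpecialLinearGroup (Fin 2) F[X]))) := by
  have hd : ∀ i : ℕ, 0 < ((X : F[X]) ^ (i+1)).degree := by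
    intro i; rw [degree_X_pow]; norm_cast; omega
  have hd' : ∀ i : ℕ, 0 < (-(X : F[X]) ^ (i+1)).degree := by
    intro i; rw [degree_neg]; exact hd i
  have hdd : ∀ i j : ℕ, i ≠ j → 0 < (-(X : F[X]) ^ (i+1) + X ^ (j+1)).degree := by
    intro i j hij
    rcases lt_or_gt_of_ne hij with h | h
    · rw [degree_add_eq_right_of_degree_lt]
      · exact hd j
      · rw [degree_neg, degree_X_pow, degree_X_pow]; norm_cast; omega
    · rw [degree_add_eq_left_of_degree_lt]
      · exact hd' i
      · rw [degree_neg, degree_X_pow, degree_X_pow]; norm_cast; omega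
  refine FreeGroup.injective_lift_of_ping_pong (G := SpecialLinearGroup (Fin 2) F[X]) (α := NZV F[X]) _
    (fun i : ULift.{u} ℕ => upM ((X : F[X]) ^ (i.down+1)) • setA F) (fun i : ULift.{u} ℕ => (loM ((X : F[X]) ^ (i.down+1)))⁻¹ • (setA F)ᶜ) ?_ ?_ ?_ ?_ ?_ ?_
  · intro i
    refine Set.Nonempty.smul_set ⟨⟨![0,1], by intro h; simpa using congrFun h 1⟩, ?_⟩
    change (0 : F[X]).degree ≤ _
    simp
  · intro i j hij
    refine Set.disjoint_left.2 ?_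
    rintro _ ⟨v, hv, rfl⟩ h
    simp only [Set.mem_smul_set_iff_inv_smul_mem, upM_inv, ← mul_smul, upM_mul] at h
    exact up_A _ (hdd j.down i.down fun h => hij (ULift.ext _ _ h).symm) v hv h
  · intro i j hij
    refine Set.disjoint_left.2 ?_
    rintro _ ⟨v, hv, rfl⟩ h
    simp only [Set.mem_smul_set_iff_inv_smul_mem, loM_inv, ← mul_smul, loM_mul] at h
    rw [neg_neg, add_comm] at h
    exact h (lo_B _ (hdd i.down j.down fun h => hij (ULift.ext _ _ h)) v hv)
  · intro i j
    refine Set.disjoint_left.2 ?_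
    rintro _ ⟨v, hv, rfl⟩ ⟨u, hu, h⟩
    have h1 := up_A _ (hd i.down) v hv
    simp only [loM_inv] at h
    rw [← h] at h1
    exact h1 (lo_B _ (hd' j.down) u hu)
  · intro i
    rw [← Set.smul_set_compl, compl_compl, smul_smul]; simp
  · intro i
    simp only [Pi.inv_apply]
    rw [← Set.smul_set_compl, smul_smul]; simp

lemma lift_hom_comp {α G H : Type*} [Group G] [Group H] (φ : G →* H) (g : α → G) (w : FreeGroup α) :
    φ (FreeGroup.lift g w) = FreeGroup.lift (fun i => φ (g i)) w :=
  DFunLike.congr_fun (FreeGroup.ext_hom (φ.comp (FreeGroup.lift g)) _ (by simp)) w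

lemma wordValues_map {G H : Type*} [Group G] [Group H] (φ : G →* H) {d : ℕ}
    (w : FreeGroup (Fin d)) {x : G} (hx : x ∈ wordValues w G) : φ x ∈ wordValues w H := by
  obtain ⟨g, rfl⟩ := hx
  exact ⟨fun i => φ (g i), (lift_hom_comp φ g w).symm⟩

lemma exists_noncentral [Infinite F] {d : ℕ} (w : FreeGroup (Fin d)) (hw : w ≠ 1) :
    ∃ x ∈ wordValues w (SpecialLinearGroup (Fin 2) F), ∀ c : F, x.1 ≠ scalar (Fin 2) c := by
  set g : Fin d → SpecialLinearGroup (Fin 2) F[X] :=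
    fun i => upM (X ^ ((i:ℕ)+1)) * loM (X ^ ((i:ℕ)+1)) with hg
  set W := FreeGroup.lift g w with hW
  have hW2 : W ^ 2 ≠ 1 := by
    intro h
    have hinj : Function.Injective (FreeGroup.lift g) := by
      have := (free_inj (F := F)).comp (FreeGroup.map_injective (f := (fun i => ULift.up i.val : Fin d → ULift ℕ)) (fun i j h => Fin.val_injective (ULift.up_injective h)))
      convert this using 1
      ext1 x
      simp only [Function.comp]
      exact DFunLike.congr_fun (FreeGroup.ext_hom (FreeGroup.lift g) ((FreeGroup.lift _).comp (FreeGroup.map _)) (by simp [hg])) x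
    rw [hW, ← map_pow, ← map_one (FreeGroup.lift g)] at h
    have := hinj h
    exact hw ((pow_eq_one_iff_left two_ne_zero).1 this)
  have : ∃ i j, ((W ^ 2).1 - 1) i j ≠ 0 := by
    by_contra! h
    apply hW2
    apply Subtype.ext
    refine Matrix.ext fun i j => ?_
    have := h i j
    rw [Matrix.sub_apply, sub_eq_zero] at this
    exact this
  obtain ⟨i, j, hij⟩ := this
  obtain ⟨t, ht⟩ : ∃ t : F, (((W ^ 2).1 - 1) i j).eval t ≠ 0 := by
    by_contra! h
    exact hij (Polynomial.funext (by simpa using h))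
  refine ⟨SpecialLinearGroup.map (evalRingHom t) W, wordValues_map _ _ ⟨g, rfl⟩, ?_⟩
  intro c hc
  apply ht
  have hdet := (SpecialLinearGroup.map (evalRingHom t) W).2
  rw [hc] at hdet
  have hc2 : c ^ 2 = 1 := by simpa using hdet
  have h2 : (SpecialLinearGroup.map (evalRingHom t) (W ^ 2)).1 = 1 := by
    rw [map_pow, pow_two]
    change (SpecialLinearGroup.map (evalRingHom t) W).1 * (SpecialLinearGroup.map (evalRingHom t) W).1 = 1
    rw [hc, ← map_mul, ← pow_two, hc2, map_one]
  have h3 := congrFun (congrFun h2 i) j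
  have h4 : ((W ^ 2).1 i j).eval t = (1 : Matrix (Fin 2) (Fin 2) F) i j := by
    rw [← h3]; rfl
  rw [Matrix.sub_apply, eval_sub, h4]
  by_cases h : i = j <;> simp [Matrix.one_apply, h]
end

section
open Matrix
variable {F : Type*} [Field F]

def slHom {m n : Type*} [Fintype m] [DecidableEq m] [Fintype n] [DecidableEq n]
    (f : Matrix m m F →* Matrix n n F) (hf : ∀ A, (f A).det = A.det) :
    SpecialLinearGroup m F →* SpecialLinearGroup n F where
  toFun g := ⟨f g.1, (hf _).trans g.2⟩
  map_one' := Subtype.ext (map_one f)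
  map_mul' _ _ := Subtype.ext (map_mul f _ _)

lemma wordValues_conj {ι : Type*} [Fintype ι] [DecidableEq ι] {d : ℕ} (w : FreeGroup (Fin d))
    (c : (Matrix ι ι F)ˣ) (x : SpecialLinearGroup ι F) (hx : x ∈ wordValues w (SpecialLinearGroup ι F)) :
    ∃ y ∈ wordValues w (SpecialLinearGroup ι F), y.1 = c.1 * x.1 * c⁻¹.1 := by
  refine ⟨slHom ⟨⟨fun A => c.1 * A * c⁻¹.1, by simp⟩, ?_⟩ ?_ x, wordValues_map _ _ hx, rfl⟩
  · intro A B
    simp [mul_assoc]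
  · intro A
    change (c.1 * A * c⁻¹.1).det = _
    rw [det_mul_right_comm, ← Units.val_mul]; simp

lemma wordValues_isConj {ι : Type*} [Fintype ι] [DecidableEq ι] {d : ℕ} (w : FreeGroup (Fin d))
    (x y : SpecialLinearGroup ι F) (h : IsConj x.1 y.1)
    (hx : x ∈ wordValues w (SpecialLinearGroup ι F)) :
    y ∈ wordValues w (SpecialLinearGroup ι F) := by
  obtain ⟨c, hc⟩ := h
  obtain ⟨z, hz, h⟩ := wordValues_conj w c x hx
  have : z = y := by
    apply Subtype.ext
    rw [h, hc.eq, mul_assoc, Units.mul_inv, mul_one]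
  exact this ▸ hz

lemma conj2 (M : Matrix (Fin 2) (Fin 2) F) (hM : ∀ c : F, M ≠ scalar (Fin 2) c) :
    IsConj !![0, -M.det; 1, M.trace] M := by
  have key : ∀ x y : F, x * (M 1 0 * x + M 1 1 * y) - y * (M 0 0 * x + M 0 1 * y) ≠ 0 →
      IsConj !![0, -M.det; 1, M.trace] M := by
    intro x y hxy
    set P : Matrix (Fin 2) (Fin 2) F := !![x, M 0 0 * x + M 0 1 * y; y, M 1 0 * x + M 1 1 * y] with hP
    have hdet : P.det ≠ 0 := by
      rw [hP, det_fin_two]; simp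
      convert hxy using 1; ring
    refine ⟨GeneralLinearGroup.mkOfDetNeZero P hdet, ?_⟩
    change P * _ = M * P
    rw [hP, det_fin_two, trace_fin_two]
    ext i j
    fin_cases i <;> fin_cases j <;> simp [Matrix.mul_apply, Fin.sum_univ_two] <;> ring
  by_contra h
  have h1 : M 1 0 = 0 := by
    by_contra h'; exact h (key 1 0 (by simpa using h'))
  have h2 : M 0 1 = 0 := by
    by_contra h'; exact h (key 0 1 (by simpa using h'))
  have h3 : M 1 1 = M 0 0 := by
    by_contra h'; exact h (key 1 1 (by simpa [h1, h2, sub_eq_zero] using h'))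
  apply hM (M 0 0)
  ext i j
  fin_cases i <;> fin_cases j <;> simp [h1, h2, h3]

lemma diag2 {d₁ d₂ : ℕ} [Infinite F] (w₁ : FreeGroup (Fin d₁)) (w₂ : FreeGroup (Fin d₂))
    (hw₁ : w₁ ≠ 1) (hw₂ : w₂ ≠ 1) (a : F) (ha : a ≠ 0) (ha2 : a ^ 2 ≠ 1) :
    ∃ x ∈ wordValues w₁ (SpecialLinearGroup (Fin 2) F),
    ∃ y ∈ wordValues w₂ (SpecialLinearGroup (Fin 2) F), (x * y).1 = diagonal ![a, a⁻¹] := by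
  obtain ⟨x, hx, hxs⟩ := exists_noncentral (F := F) w₁ hw₁
  obtain ⟨y, hy, hys⟩ := exists_noncentral (F := F) w₂ hw₂
  set t := x.1.trace with ht
  set s := y.1.trace with hs
  have hne : a ^ 2 - 1 ≠ 0 := sub_ne_zero.2 ha2
  obtain ⟨p, hp⟩ : ∃ p : F, a * p + a⁻¹ * (s - p) = t := by
    refine ⟨(t * a - s) / (a ^ 2 - 1), ?_⟩
    field_simp
    ring
  let X : SpecialLinearGroup (Fin 2) F := ⟨!![a * p, a; a⁻¹ * (p * (s - p) - 1), a⁻¹ * (s - p)], by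
    rw [det_fin_two]; simp; field_simp; ring⟩
  let Y : SpecialLinearGroup (Fin 2) F := ⟨!![s - p, -1; -(p * (s - p) - 1), p], by
    rw [det_fin_two]; simp; ring⟩
  refine ⟨X, wordValues_isConj w₁ x X ?_ hx, Y, wordValues_isConj w₂ y Y ?_ hy, ?_⟩
  · have h1 := conj2 x.1 hxs
    have h2 := conj2 X.1 (by
      intro c h
      have := congrFun (congrFun h 0) 1
      simp [X, ha] at this)
    have h3 : X.1.trace = t := by rw [trace_fin_two]; simpa [X] using hp
    rw [X.2, h3] at h2
    rw [x.2] at h1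
    exact h1.symm.trans h2
  · have h1 := conj2 y.1 hys
    have h2 := conj2 Y.1 (by
      intro c h
      have := congrFun (congrFun h 0) 1
      simp [Y] at this)
    have h3 : Y.1.trace = s := by rw [trace_fin_two]; simp [Y]
    rw [Y.2, h3] at h2
    rw [y.2] at h1
    exact h1.symm.trans h2
  · change X.1 * Y.1 = _
    ext i j
    fin_cases i <;> fin_cases j <;> simp [X, Y, Matrix.mul_apply, Fin.sum_univ_two] <;>
      field_simp <;> ring

def HasDiag (F : Type*) [Field F] {d₁ d₂ : ℕ} (w₁ : FreeGroup (Fin d₁)) (w₂ : FreeGroup (Fin d₂))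
    (ι : Type) [Fintype ι] [DecidableEq ι] : Prop :=
  ∃ β : ι → F, Function.Injective β ∧ ∃ x ∈ wordValues w₁ (SpecialLinearGroup ι F),
    ∃ y ∈ wordValues w₂ (SpecialLinearGroup ι F), x.1 * y.1 = diagonal β

lemma HasDiag.equiv {d₁ d₂ : ℕ} {w₁ : FreeGroup (Fin d₁)} {w₂ : FreeGroup (Fin d₂)}
    {ι κ : Type} [Fintype ι] [DecidableEq ι] [Fintype κ] [DecidableEq κ] (e : ι ≃ κ)
    (h : HasDiag F w₁ w₂ ι) : HasDiag F w₁ w₂ κ := by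
  obtain ⟨β, hβ, x, hx, y, hy, hxy⟩ := h
  let f : Matrix ι ι F →* Matrix κ κ F := (reindexAlgEquiv F F e : Matrix ι ι F ≃* Matrix κ κ F)
  have hf : ∀ A, (f A).det = A.det := fun A => det_reindexAlgEquiv F F e A
  refine ⟨β ∘ e.symm, hβ.comp e.symm.injective, slHom f hf x, wordValues_map _ _ hx,
    slHom f hf y, wordValues_map _ _ hy, ?_⟩
  change f x.1 * f y.1 = _
  rw [← map_mul, hxy]
  change reindex e e _ = _
  simp [reindex_apply, submatrix_diagonal_equiv]

def blockHom (m n : Type) [Fintype m] [DecidableEq m] [Fintype n] [DecidableEq n] :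
    SpecialLinearGroup m F × SpecialLinearGroup n F →* SpecialLinearGroup (m ⊕ n) F where
  toFun g := ⟨fromBlocks g.1.1 0 0 g.2.1, by rw [det_fromBlocks_zero₂₁, g.1.2, g.2.2, one_mul]⟩
  map_one' := Subtype.ext fromBlocks_one
  map_mul' _ _ := Subtype.ext (by
    change fromBlocks (_ * _) 0 0 (_ * _) = fromBlocks _ _ _ _ * fromBlocks _ _ _ _
    rw [fromBlocks_multiply]; simp)

lemma wordValues_prod {G H : Type*} [Group G] [Group H] {d : ℕ}
    (w : FreeGroup (Fin d)) {x : G} {y : H} (hx : x ∈ wordValues w G) (hy : y ∈ wordValues w H) :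
    (x, y) ∈ wordValues w (G × H) := by
  obtain ⟨g, rfl⟩ := hx
  obtain ⟨h, rfl⟩ := hy
  refine ⟨fun i => (g i, h i), ?_⟩
  ext
  · exact lift_hom_comp (MonoidHom.fst G H) _ w
  · exact lift_hom_comp (MonoidHom.snd G H) _ w

lemma one_mem_wordValues {G : Type*} [Group G] {d : ℕ} (w : FreeGroup (Fin d)) :
    1 ∈ wordValues w G := by
  simpa using wordValues_map (1 : G →* G) w ⟨fun _ => 1, rfl⟩

lemma HasDiag.step [Infinite F] {d₁ d₂ : ℕ} {w₁ : FreeGroup (Fin d₁)} {w₂ : FreeGroup (Fin d₂)}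
    (hw₁ : w₁ ≠ 1) (hw₂ : w₂ ≠ 1)
    {ι : Type} [Fintype ι] [DecidableEq ι] 
    (h : HasDiag F w₁ w₂ ι) : HasDiag F w₁ w₂ (Fin 2 ⊕ ι) := by
  obtain ⟨β, hβ, x, hx, y, hy, hxy⟩ := h
  obtain ⟨a, ha⟩ : ∃ a : F, a ∉ ({0, 1, -1} ∪ Set.range β ∪ Set.range (fun i => (β i)⁻¹) : Set F) :=
    Set.Infinite.exists_notMem_finite Set.infinite_univ
      (((Set.toFinite _).union (Set.finite_range _)).union (Set.finite_range _)) |>.imp fun _ h => h.2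
  simp only [Set.mem_union, Set.mem_insert_iff, Set.mem_singleton_iff, Set.mem_range, not_or,
    not_exists] at ha
  obtain ⟨⟨⟨h0, h1, h2⟩, h3⟩, h4⟩ := ha
  have hsq : a ^ 2 ≠ 1 := by
    intro h; rw [pow_two] at h; rcases mul_self_eq_one_iff.1 h with h | h <;> contradiction
  obtain ⟨x', hx', y', hy', hxy'⟩ := diag2 w₁ w₂ hw₁ hw₂ a h0 hsq
  have h5 : a ≠ a⁻¹ := by
    intro h; apply hsq; rw [pow_two]; nth_rewrite 2 [h]; exact mul_inv_cancel₀ h0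
  have h6 : ∀ i, β i ≠ a⁻¹ := fun i h => h4 i (by simp [h])
  refine ⟨Sum.elim ![a, a⁻¹] β, ?_, blockHom _ _ (x', x), wordValues_map _ _ (wordValues_prod _ hx' hx),
     blockHom _ _ (y', y), wordValues_map _ _ (wordValues_prod _ hy' hy), ?_⟩
  · refine Function.Injective.sumElim ?_ hβ ?_
    · intro i j hij
      fin_cases i <;> fin_cases j <;> simp [h5, h5.symm] at hij ⊢
    · intro i j
      fin_cases i
      · exact fun h => h3 j h.symm
      · exact fun h => h6 j h.symm
  · change fromBlocks x'.1 0 0 x.1 * fromBlocks y'.1 0 0 y.1 = _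
    have : x'.1 * y'.1 = diagonal ![a, a⁻¹] := hxy'
    rw [fromBlocks_multiply, hxy, this]; simp [fromBlocks_diagonal]

lemma hasDiag [Infinite F] {d₁ d₂ : ℕ} {w₁ : FreeGroup (Fin d₁)} {w₂ : FreeGroup (Fin d₂)}
    (hw₁ : w₁ ≠ 1) (hw₂ : w₂ ≠ 1) (n : ℕ) : HasDiag F w₁ w₂ (Fin n) := by
  induction n using Nat.twoStepInduction with
  | zero => exact ⟨1, Function.injective_of_subsingleton _, 1, one_mem_wordValues _, 1,
      one_mem_wordValues _, Subsingleton.elim _ _⟩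
  | one => exact ⟨1, Function.injective_of_subsingleton _, 1, one_mem_wordValues _, 1,
      one_mem_wordValues _, by change (1 : Matrix _ _ F) * 1 = _; simp⟩
  | more n ih _ => exact (ih.step hw₁ hw₂).equiv (finSumFinEquiv.trans (finCongr (add_comm 2 n)))
end

section
open Matrix
variable {F : Type*} [Field F]

def NonSc {ι : Type*} [Fintype ι] [DecidableEq ι] (M : Matrix ι ι F) : Prop :=
  ∀ c : F, M ≠ scalar ι c

lemma NonSc.conj {ι : Type*} [Fintype ι] [DecidableEq ι] {M N : Matrix ι ι F} (h : NonSc M)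
    (hc : IsConj M N) : NonSc N := by
  rintro c rfl
  obtain ⟨u, hu⟩ := hc
  apply h c
  have h1 : u.1 * M = u.1 * scalar ι c := by
    rw [hu.eq]; exact scalar_commute c (fun _ => mul_comm _ _) _
  exact u.isUnit.mul_left_cancel h1

lemma isConj_upper {m n : Type*} [Fintype m] [DecidableEq m] [Fintype n] [DecidableEq n]
    (ψ : Matrix m n F) (A : Matrix m m F) (r : Matrix m n F) (c : Matrix n m F) (B : Matrix n n F) :
    IsConj (fromBlocks A r c B)
      (fromBlocks (A + ψ * c) (r + ψ * B - (A + ψ * c) * ψ) c (B - c * ψ)) := by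
  refine ⟨⟨fromBlocks 1 ψ 0 1, fromBlocks 1 (-ψ) 0 1, ?_, ?_⟩, ?_⟩
  · simp [fromBlocks_multiply]
  · simp [fromBlocks_multiply]
  · change fromBlocks _ _ _ _ * fromBlocks _ _ _ _ = fromBlocks _ _ _ _ * fromBlocks _ _ _ _
    simp [fromBlocks_multiply]

lemma isConj_lower {m n : Type*} [Fintype m] [DecidableEq m] [Fintype n] [DecidableEq n]
    (z : Matrix n m F) (A : Matrix m m F) (r : Matrix m n F) (c : Matrix n m F) (B : Matrix n n F) :
    IsConj (fromBlocks A r c B)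
      (fromBlocks (A - r * z) r (c + z * A - (B + z * r) * z) (B + z * r)) := by
  refine ⟨⟨fromBlocks 1 0 z 1, fromBlocks 1 0 (-z) 1, ?_, ?_⟩, ?_⟩
  · simp [fromBlocks_multiply]
  · simp [fromBlocks_multiply]
  · change fromBlocks _ _ _ _ * fromBlocks _ _ _ _ = fromBlocks _ _ _ _ * fromBlocks _ _ _ _
    simp [fromBlocks_multiply, add_comm]

lemma isConj_blockdiag {m n : Type*} [Fintype m] [DecidableEq m] [Fintype n] [DecidableEq n]
    (A : Matrix m m F) (r : Matrix m n F) (c : Matrix n m F) (B D : Matrix n n F) (u : (Matrix n n F)ˣ)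
    (hu : SemiconjBy u.1 B D) :
    IsConj (fromBlocks A r c B) (fromBlocks A (r * u⁻¹.1) (u.1 * c) D) := by
  refine ⟨⟨fromBlocks 1 0 0 u.1, fromBlocks 1 0 0 u⁻¹.1, ?_, ?_⟩, ?_⟩
  · simp [fromBlocks_multiply]
  · simp [fromBlocks_multiply]
  · change fromBlocks _ _ _ _ * fromBlocks _ _ _ _ = fromBlocks _ _ _ _ * fromBlocks _ _ _ _
    simp [fromBlocks_multiply, hu.eq, mul_assoc]

lemma conj_diag_lower {n : Type*} [Fintype n] [DecidableEq n] (b : F) (β : n → F)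
    (hb : ∀ i, β i ≠ b) (c : Matrix n Unit F) (X : Matrix n n F) (hX : IsConj X (diagonal β)) :
    IsConj (fromBlocks (diagonal fun _ : Unit => b) 0 c X)
      (diagonal (Sum.elim (fun _ : Unit => b) β)) := by
  obtain ⟨u, hu⟩ := hX
  refine (isConj_blockdiag _ 0 c X _ u hu).trans ?_
  set c' := u.1 * c
  have h := isConj_lower (of fun i j => c' i j / (β i - b)) (diagonal fun _ : Unit => b)
    0 c' (diagonal β)
  convert h using 1
  · simp
  · rw [← fromBlocks_diagonal]
    congr 1
    · simp
    · ext i j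
      have := sub_ne_zero.2 (hb i)
      simp [diagonal_mul, mul_diagonal]
      field_simp
      ring
    · simp

lemma conj_diag_upper {n : Type*} [Fintype n] [DecidableEq n] (b : F) (β : n → F)
    (hb : ∀ i, β i ≠ b) (r : Matrix Unit n F) (X : Matrix n n F) (hX : IsConj X (diagonal β)) :
    IsConj (fromBlocks (diagonal fun _ : Unit => b) r 0 X)
      (diagonal (Sum.elim (fun _ : Unit => b) β)) := by
  obtain ⟨u, hu⟩ := hX
  refine (isConj_blockdiag _ r 0 X _ u hu).trans ?_
  set c' := r * u⁻¹.1
  have h := isConj_upper (of fun i j => c' i j / (b - β j)) (diagonal fun _ : Unit => b)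
    c' 0 (diagonal β)
  convert h using 1
  · simp
  · rw [← fromBlocks_diagonal]
    congr 1
    · simp
    · ext i j
      have := sub_ne_zero.2 (hb j).symm
      simp [diagonal_mul, mul_diagonal]
      field_simp
      ring
    · simp

lemma exists_c_ne {n : Type*} [Fintype n] [DecidableEq n] [Infinite F]
    (M : Matrix (Unit ⊕ n) (Unit ⊕ n) F) (hM : NonSc M) :
    ∃ a r c B, IsConj M (fromBlocks a r c B) ∧ c ≠ 0 := by
  by_contra! H
  set a := M.toBlocks₁₁ with ha
  set r := M.toBlocks₁₂ with hr
  set c := M.toBlocks₂₁ with hc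
  set B := M.toBlocks₂₂ with hB
  have hM' : M = fromBlocks a r c B := (fromBlocks_toBlocks M).symm
  have hc0 : c = 0 := H a r c B (hM' ▸ IsConj.refl _)
  have h1 : ∀ z : Matrix n Unit F, z * a = (B + z * r) * z := by
    intro z
    have := H _ _ _ _ (hM' ▸ isConj_lower z a r c B)
    rw [hc0, zero_add, sub_eq_zero] at this
    exact this
  obtain ⟨t, ht⟩ : ∃ t : F, t ∉ ({0, 1} : Set F) :=
    Set.Infinite.exists_notMem_finite Set.infinite_univ (Set.toFinite _) |>.imp fun _ h => h.2
  simp only [Set.mem_insert_iff, Set.mem_singleton_iff, not_or] at ht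
  have h2 : ∀ z : Matrix n Unit F, z * (r * z) = 0 := by
    intro z
    have e1 := h1 z
    have e2 := h1 (t • z)
    simp only [Matrix.add_mul, smul_mul, Matrix.mul_smul, Matrix.mul_assoc] at e1 e2
    rw [e1] at e2
    have e3 : t • (t - 1) • (z * (r * z)) = 0 := by
      rw [smul_add, smul_add] at e2
      have := add_left_cancel e2
      rw [sub_smul, one_smul, smul_sub, sub_eq_zero]
      exact this.symm
    rw [smul_eq_zero, smul_eq_zero, sub_eq_zero] at e3
    tauto
  have h3 : ∀ z : Matrix n Unit F, r * z = 0 := by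
    intro z
    by_cases hz : z = 0
    · simp [hz]
    · obtain ⟨i, hi⟩ : ∃ i, z i () ≠ 0 := by
        by_contra! h; exact hz (by ext i j; exact h i)
      ext p q
      have := congrFun (congrFun (h2 z) i) ()
      rw [Matrix.mul_apply] at this
      simp [hi] at this
      exact this
  have h4 : r = 0 := by
    ext i j
    have := congrFun (congrFun (h3 (of fun k _ => if k = j then 1 else 0)) ()) ()
    simpa [Matrix.mul_apply] using this
  apply hM (a () ())
  rw [hM', hc0, h4]
  have h5 : B = diagonal fun _ => a () () := by
    ext i j
    have := congrFun (congrFun (h1 (of fun k _ => if k = j then 1 else 0)) i) ()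
    simp [h4, Matrix.mul_apply] at this
    rw [← this, diagonal_apply]
  rw [h5]
  have h6 : a = diagonal fun _ => a () () := by ext i j; simp
  conv_lhs => rw [h6]
  rw [fromBlocks_diagonal, scalar_apply]
  congr 1
  ext i; rcases i <;> simp

lemma exists_form {n : Type*} [Fintype n] [DecidableEq n] [Infinite F]
    (M : Matrix (Unit ⊕ n) (Unit ⊕ n) F) (hM : NonSc M) (α : F) (hα : α ≠ 0) (hdet : M.det ≠ 0) :
    ∃ r c B, IsConj M (fromBlocks (diagonal fun _ : Unit => α) r c B) ∧
      (2 ≤ Fintype.card n → NonSc (B - α⁻¹ • (c * r))) := by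
  obtain ⟨a, r, c, B, h, hc⟩ := exists_c_ne M hM
  obtain ⟨i, hi⟩ : ∃ i, c i () ≠ 0 := by
    by_contra! h; exact hc (by ext i j; exact h i)
  obtain ⟨r, B, h⟩ : ∃ r B, IsConj M (fromBlocks (diagonal fun _ : Unit => α) r c B) := by
    have h' := isConj_upper (of fun _ j => if j = i then (α - a () ()) / c i () else 0) a r c B
    have ea : a + (of fun _ j => if j = i then (α - a () ()) / c i () else 0) * c =
        diagonal fun _ : Unit => α := by
      ext p q
      simp [Matrix.mul_apply, hi]
    rw [ea] at h'
    exact ⟨_, _, h.trans h'⟩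
  by_cases hB : NonSc (B - α⁻¹ • (c * r))
  · exact ⟨r, c, B, h, fun _ => hB⟩
  by_cases hcard : 2 ≤ Fintype.card n
  swap
  · exact ⟨r, c, B, h, fun h => absurd h hcard⟩
  obtain ⟨j, hj⟩ : ∃ j, j ≠ i := by
    have : Nontrivial n := Fintype.one_lt_card_iff_nontrivial.1 hcard
    exact exists_ne i
  simp only [NonSc, not_forall, not_not] at hB
  obtain ⟨l, hl⟩ := hB
  have hl0 : l ≠ 0 := by
    rintro rfl
    obtain ⟨u, hu⟩ := h
    apply hdet
    have : M.det = (fromBlocks (diagonal fun _ : Unit => α) r c B).det := by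
      have := congrArg det hu.eq
      rw [det_mul, det_mul, mul_comm] at this
      exact mul_right_cancel₀ ((Matrix.isUnit_iff_isUnit_det _).1 u.isUnit).ne_zero this
    rw [this]
    have h2 : fromBlocks (diagonal fun _ : Unit => α) r c B =
      fromBlocks 1 0 (α⁻¹ • c) 1 * fromBlocks (diagonal fun _ : Unit => α) r 0 (B - α⁻¹ • (c * r)) := by
      rw [fromBlocks_multiply]
      congr 1
      · simp
      · simp
      · ext p q; simp [hα]; field_simp
      · simp
    rw [h2, det_mul, det_fromBlocks_zero₂₁, hl]
    have : Nonempty n := ⟨i⟩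
    simp
  -- the row ψ
  let ψ : Matrix Unit n F := of fun _ k => if k = j then c i () else if k = i then - c j () else 0
  have hψc : ψ * c = 0 := by
    ext p q
    have : ∀ k, (if k = j then c i () else if k = i then - c j () else 0) * c k () =
      (if k = j then c i () * c j () else 0) + (if k = i then - (c j () * c i ()) else 0) := by
      intro k
      by_cases h1 : k = j
      · subst h1; simp [hj]
      · by_cases h2 : k = i
        · subst h2; simp [h1]
        · simp [h1, h2]
    simp [ψ, Matrix.mul_apply, this, Finset.sum_add_distrib]
    ring
  have h' := h.trans (isConj_upper ψ _ r c B)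
  rw [hψc, add_zero] at h'
  refine ⟨_, _, _, h', fun _ => ?_⟩
  have hBe : B = scalar n l + α⁻¹ • (c * r) := by rw [← hl]; abel
  have hψB : ψ * B = l • ψ := by
    rw [hBe, Matrix.mul_add, Matrix.mul_smul, ← Matrix.mul_assoc, hψc]
    ext p q
    simp [scalar_apply, mul_diagonal, mul_comm]
  have hdiag : (diagonal fun _ : Unit => α) * ψ = α • ψ := by
    ext p q; simp [diagonal_mul]
  have e : B - c * ψ - α⁻¹ • (c * (r + ψ * B - (diagonal fun _ : Unit => α) * ψ)) =
      scalar n l - (α⁻¹ * l) • (c * ψ) := by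
    rw [hψB, hdiag, ← hl]
    simp only [Matrix.mul_add, Matrix.mul_sub, Matrix.mul_smul, smul_add, smul_sub, smul_smul, inv_mul_cancel₀ hα,
      one_smul]
    abel
  rw [e]
  intro k hk
  have h7 := congrFun (congrFun hk i) j
  simp [scalar_apply, diagonal_apply, hj.symm, ψ, Matrix.mul_apply, hα, hl0, hi] at h7

lemma factor [Infinite F] (n : ℕ) : ∀ (ι : Type) [Fintype ι] [DecidableEq ι], Fintype.card ι = n →
    ∀ (A : Matrix ι ι F) (β γ : ι → F), (2 ≤ n → NonSc A) → Function.Injective β →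
    Function.Injective γ → (∀ i, β i ≠ 0) → (∀ i, γ i ≠ 0) → A.det = (∏ i, β i) * ∏ i, γ i →
    ∃ X Y, A = X * Y ∧ IsConj X (diagonal β) ∧ IsConj Y (diagonal γ) := by
  induction n with
  | zero =>
    intro ι _ _ hι A β γ _ _ _ _ _ _
    have := Fintype.card_eq_zero_iff.1 hι
    exact ⟨_, _, Subsingleton.elim _ _, IsConj.refl _, IsConj.refl _⟩
  | succ n ih =>
    intro ι _ _ hι A β γ hA hβ hγ hβ0 hγ0 hdet
    rcases Nat.eq_zero_or_pos n with rfl | hn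
    · obtain ⟨i, hi⟩ := Fintype.card_eq_one_iff.1 hι
      have : Unique ι := ⟨⟨i⟩, hi⟩
      refine ⟨_, _, ?_, IsConj.refl _, IsConj.refl _⟩
      rw [det_unique, Fintype.prod_unique, Fintype.prod_unique] at hdet
      ext p q
      rw [Subsingleton.elim p default, Subsingleton.elim q default, hdet]
      simp
    have e : ι ≃ Unit ⊕ Fin n := Fintype.equivOfCardEq (by simp [hι, add_comm])
    let f : Matrix ι ι F ≃* Matrix (Unit ⊕ Fin n) (Unit ⊕ Fin n) F := (reindexAlgEquiv F F e : _ ≃* _)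
    have hfdet : ∀ A, (f A).det = A.det := fun A => det_reindexAlgEquiv F F e A
    have hfd : ∀ δ : Unit ⊕ Fin n → F, f.symm (diagonal δ) = diagonal (δ ∘ e) := by
      intro δ
      change (reindex e.symm e.symm) (diagonal δ) = _
      simp [reindex_apply, submatrix_diagonal_equiv]
    set b := β (e.symm (Sum.inl ())) with hb
    set g := γ (e.symm (Sum.inl ())) with hg
    set β' : Fin n → F := fun i => β (e.symm (Sum.inr i)) with hβ'
    set γ' : Fin n → F := fun i => γ (e.symm (Sum.inr i)) with hγ'
    have hb0 : b ≠ 0 := hβ0 _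
    have hg0 : g ≠ 0 := hγ0 _
    have pβ : ∏ i, β i = b * ∏ i, β' i := by
      rw [← e.symm.prod_comp]; simp [hb, hβ']
    have pγ : ∏ i, γ i = g * ∏ i, γ' i := by
      rw [← e.symm.prod_comp]; simp [hg, hγ']
    have hdet0 : A.det ≠ 0 := by
      rw [hdet]
      exact mul_ne_zero (Finset.prod_ne_zero_iff.2 fun i _ => hβ0 i)
        (Finset.prod_ne_zero_iff.2 fun i _ => hγ0 i)
    have hfA : NonSc (f A) := by
      intro c hc
      apply hA (by omega) c
      apply f.injective
      rw [hc]
      apply f.symm.injective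
      rw [f.symm_apply_apply, scalar_apply, hfd]; rfl
    obtain ⟨r, c, B, h, hns⟩ := exists_form (f A) hfA (b * g) (mul_ne_zero hb0 hg0)
      (by rwa [hfdet])
    set S := B - (b * g)⁻¹ • (c * r) with hS
    have h2 : fromBlocks (diagonal fun _ : Unit => b * g) r c B =
      fromBlocks 1 0 ((b * g)⁻¹ • c) 1 * fromBlocks (diagonal fun _ : Unit => b * g) r 0 S := by
      rw [fromBlocks_multiply]
      congr 1
      · simp
      · simp
      · ext p q; simp; field_simp
      · simp [hS]
    obtain ⟨u, hu⟩ := h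
    have hSdet : S.det = (∏ i, β' i) * ∏ i, γ' i := by
      have : (f A).det = (fromBlocks (diagonal fun _ : Unit => b * g) r c B).det := by
        have := congrArg det hu.eq
        rw [det_mul, det_mul, mul_comm] at this
        exact mul_right_cancel₀ ((Matrix.isUnit_iff_isUnit_det _).1 u.isUnit).ne_zero this
      rw [hfdet, hdet, h2, det_mul, det_fromBlocks_zero₂₁, det_fromBlocks_zero₁₂, pβ, pγ] at this
      simp at this
      apply mul_left_cancel₀ (mul_ne_zero hb0 hg0)
      rw [← this]; ring
    obtain ⟨X, Y, hXY, hX, hY⟩ := ih (Fin n) (by simp) S β' γ'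
      (fun h => hns (by simpa using h))
      (fun i j h => Sum.inr_injective (e.symm.injective (hβ h)))
      (fun i j h => Sum.inr_injective (e.symm.injective (hγ h)))
      (fun i => hβ0 _) (fun i => hγ0 _) hSdet
    have cX := conj_diag_lower b β' (fun i h => by
      have := e.symm.injective (hβ h); simp at this) (g⁻¹ • c) X hX
    have cY := conj_diag_upper g γ' (fun i h => by
      have := e.symm.injective (hγ h); simp at this) (b⁻¹ • r) Y hY
    have hprod : fromBlocks (diagonal fun _ : Unit => b * g) r c B =
      fromBlocks (diagonal fun _ : Unit => b) 0 (g⁻¹ • c) X *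
      fromBlocks (diagonal fun _ : Unit => g) (b⁻¹ • r) 0 Y := by
      rw [fromBlocks_multiply]
      congr 1
      · simp
      · ext p q; simp [diagonal_mul, hb0]
      · ext p q; simp [mul_diagonal]; field_simp
      · rw [← hXY, hS]
        simp [smul_smul, mul_comm]
    set X1 := fromBlocks (diagonal fun _ : Unit => b) 0 (g⁻¹ • c) X
    set Y1 := fromBlocks (diagonal fun _ : Unit => g) (b⁻¹ • r) 0 Y
    have conjback : ∀ (Z : Matrix (Unit ⊕ Fin n) (Unit ⊕ Fin n) F) (δ : ι → F) (x) (δ'),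
        x = δ (e.symm (Sum.inl ())) → δ' = (fun i => δ (e.symm (Sum.inr i))) →
        IsConj Z (diagonal (Sum.elim (fun _ : Unit => x) δ')) →
        IsConj (f.symm (u⁻¹.1 * Z * u.1)) (diagonal δ) := by
      rintro Z δ x δ' rfl rfl hZ
      have h1 : IsConj (u⁻¹.1 * Z * u.1) Z := ⟨u, by
        simp [SemiconjBy, ← mul_assoc]⟩
      have h2 := (f.symm : _ →* Matrix ι ι F).map_isConj (h1.trans hZ)
      have h3 : f.symm (diagonal (Sum.elim (fun _ : Unit => δ (e.symm (Sum.inl ())))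
          (fun i => δ (e.symm (Sum.inr i))))) = diagonal δ := by
        rw [hfd]
        congr 1
        ext i
        obtain ⟨k, rfl⟩ := e.symm.surjective i
        rcases k with k | k <;> simp
      rw [← h3]; exact h2
    refine ⟨f.symm (u⁻¹.1 * X1 * u.1), f.symm (u⁻¹.1 * Y1 * u.1), ?_, conjback _ _ _ _ hb hβ' cX,
      conjback _ _ _ _ hg hγ' cY⟩
    rw [← map_mul]
    apply f.injective
    rw [f.apply_symm_apply]
    have : u⁻¹.1 * X1 * u.1 * (u⁻¹.1 * Y1 * u.1) = u⁻¹.1 * (X1 * Y1) * u.1 := by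
      simp only [mul_assoc, Units.mul_inv_cancel_left]
    rw [this, ← hprod, mul_assoc, ← hu.eq, Units.inv_mul_cancel_left]

lemma two_words [Infinite F] {n d₁ d₂ : ℕ} (w₁ : FreeGroup (Fin d₁)) (w₂ : FreeGroup (Fin d₂))
    (hw₁ : w₁ ≠ 1) (hw₂ : w₂ ≠ 1) : ∃ β : Fin n → F, Function.Injective β ∧ ∏ i, β i = 1 ∧
    ∀ X : Matrix (Fin n) (Fin n) F, IsConj X (diagonal β) →
      ∃ x ∈ wordValues w₁ (SpecialLinearGroup (Fin n) F),
      ∃ y ∈ wordValues w₂ (SpecialLinearGroup (Fin n) F), X = x.1 * y.1 := by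
  obtain ⟨β, hβ, x, hx, y, hy, hxy⟩ := hasDiag (F := F) hw₁ hw₂ n
  refine ⟨β, hβ, ?_, ?_⟩
  · rw [← det_diagonal, ← hxy, det_mul, x.2, y.2, one_mul]
  · intro X hX
    obtain ⟨u, hu⟩ := hX.symm
    obtain ⟨x', hx', ex⟩ := wordValues_conj w₁ u x hx
    obtain ⟨y', hy', ey⟩ := wordValues_conj w₂ u y hy
    refine ⟨x', hx', y', hy', ?_⟩
    have : u.1 * x.1 * u⁻¹.1 * (u.1 * y.1 * u⁻¹.1) = u.1 * (x.1 * y.1) * u⁻¹.1 := by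
      simp only [mul_assoc, Units.inv_mul_cancel_left]
    rw [ex, ey, this, hxy, hu.eq, mul_assoc, Units.mul_inv, mul_one]

end

/-- If `F` is an infinite field, `n ≥ 2`, and `w₁, w₂, w₃, w₄` are nontrivial words, then every
noncentral element of `SL_n(F)` is in `w₁(SL_n(F)) · w₂(SL_n(F)) · w₃(SL_n(F)) · w₄(SL_n(F))`. -/
theorem sl_waring_four_noncentral {F : Type*} [Field F] [Infinite F]
    (n : ℕ) (hn : 2 ≤ n) {d₁ d₂ d₃ d₄ : ℕ}
    (w₁ : FreeGroup (Fin d₁)) (w₂ : FreeGroup (Fin d₂))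
    (w₃ : FreeGroup (Fin d₃)) (w₄ : FreeGroup (Fin d₄))
    (hw₁ : w₁ ≠ 1) (hw₂ : w₂ ≠ 1) (hw₃ : w₃ ≠ 1) (hw₄ : w₄ ≠ 1) :
    ∀ g : Matrix.SpecialLinearGroup (Fin n) F,
      g ∉ Subgroup.center (Matrix.SpecialLinearGroup (Fin n) F) →
      ∃ g₁ ∈ wordValues w₁ (Matrix.SpecialLinearGroup (Fin n) F),
        ∃ g₂ ∈ wordValues w₂ (Matrix.SpecialLinearGroup (Fin n) F),
          ∃ g₃ ∈ wordValues w₃ (Matrix.SpecialLinearGroup (Fin n) F),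
            ∃ g₄ ∈ wordValues w₄ (Matrix.SpecialLinearGroup (Fin n) F),
              g = g₁ * g₂ * g₃ * g₄ := by
  intro g hg
  obtain ⟨β, hβ, pβ, Hβ⟩ := two_words (F := F) (n := n) w₁ w₂ hw₁ hw₂
  obtain ⟨γ, hγ, pγ, Hγ⟩ := two_words (F := F) (n := n) w₃ w₄ hw₃ hw₄
  have hns : NonSc g.1 := by
    intro c hc
    apply hg
    rw [Matrix.SpecialLinearGroup.mem_center_iff]
    refine ⟨c, ?_, hc.symm⟩
    have := g.2
    rw [hc] at this
    simpa using this
  obtain ⟨X, Y, hXY, hX, hY⟩ := factor n (Fin n) (by simp) g.1 β γ (fun _ => hns) hβ hγ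
    (fun i h => by rw [Finset.prod_eq_zero (Finset.mem_univ i) h] at pβ; exact zero_ne_one pβ)
    (fun i h => by rw [Finset.prod_eq_zero (Finset.mem_univ i) h] at pγ; exact zero_ne_one pγ)
    (by rw [pβ, pγ, g.2, one_mul])
  obtain ⟨g₁, h₁, g₂, h₂, e₁⟩ := Hβ X hX
  obtain ⟨g₃, h₃, g₄, h₄, e₂⟩ := Hγ Y hY
  refine ⟨g₁, h₁, g₂, h₂, g₃, h₃, g₄, h₄, ?_⟩
  apply Subtype.ext
  rw [hXY, e₁, e₂, mul_assoc (g₁ * g₂)]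
  rfl
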